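/- The packing chromatic number of the graph G_1 is at least 11; that is, G_1 admits no k-packing coloring for any k ≤ 10. -/

import Mathlib

/-- `W` is an `i`-packing in `G`: any two distinct vertices of `W` are at
graph distance greater than `i` in `G`. -/
def IsPacking {V : Type*} (G : SimpleGraph V) (i : ℕ) (W : Set V) : Prop :=
  ∀ u ∈ W, ∀ v ∈ W, u ≠ v → i < G.dist u v

/-- `c` is a `k`-packing coloring of `G`: every color lies in `{1, …, k}` and
for each `i ∈ {1, …, k}` the color class `c⁻¹(i)` is an `i`-packing. -/
def IsPackingColoring {V : Type*} (G : SimpleGraph V) (k : ℕ) (c : V → ℕ) : Prop :=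
  (∀ v, 1 ≤ c v ∧ c v ≤ k) ∧ ∀ i, 1 ≤ i → i ≤ k → IsPacking G i {v | c v = i}

/-- The packing chromatic number: the least `k` admitting a `k`-packing coloring. -/
noncomputable def packingChromaticNumber {V : Type*} (G : SimpleGraph V) : ℕ :=
  sInf {k | ∃ c : V → ℕ, IsPackingColoring G k c}


/-- Edges of `H`; vertices `y1,…,y7` are `0,…,6`, `z1,…,z7` are `7,…,13`,
and `w` is `14`. -/
def Hedges : List (Fin 15 × Fin 15) :=
  [(0,1),(1,2),(2,6),(6,5),(5,4),(4,0),(1,3),(3,5),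
   (7,8),(8,9),(9,13),(13,12),(12,11),(11,7),(8,10),(10,12),
   (3,14),(14,10),(2,7),(4,13)]

/-- The graph `H`. -/
def Hgraph : SimpleGraph (Fin 15) :=
  SimpleGraph.fromRel (fun u v => (u, v) ∈ Hedges)

/-- Glue two disjoint copies of `G` together with five new vertices
`Sum.inr (Sum.inr i)` for `i : Fin 5`: the `i`-th new vertex is adjacent
exactly to `p i` in the first copy and to `q i` in the second copy. -/
def glue {V : Type*} (G : SimpleGraph V) (p q : Fin 5 → V) :
    SimpleGraph (V ⊕ V ⊕ Fin 5) :=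
  SimpleGraph.fromRel (fun u v =>
    match u, v with
    | Sum.inl a, Sum.inl b => G.Adj a b
    | Sum.inr (Sum.inl a), Sum.inr (Sum.inl b) => G.Adj a b
    | Sum.inr (Sum.inr i), Sum.inl a => a = p i
    | Sum.inr (Sum.inr i), Sum.inr (Sum.inl b) => b = q i
    | _, _ => False)

/-- Attachment points of `a,b,c,d,x` in the first copy (`H'`):
`a ↦ y5`, `b ↦ z7`, `c ↦ y3`, `d ↦ z1`, `x ↦ w`. -/
def pH : Fin 5 → Fin 15 := ![4, 13, 2, 7, 14]

/-- Attachment points of `a,b,c,d,x` in the second copy (`H''`):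
`a ↦ y1`, `b ↦ z3`, `c ↦ z5`, `d ↦ y7`, `x ↦ w`. -/
def qH : Fin 5 → Fin 15 := ![0, 9, 11, 6, 14]

/-- The graph `G₀`: two disjoint copies of `H` plus the five vertices
`a,b,c,d,x`, which are `Sum.inr (Sum.inr 0), …, Sum.inr (Sum.inr 4)`. -/
def G₀ : SimpleGraph (Fin 15 ⊕ Fin 15 ⊕ Fin 5) := glue Hgraph pH qH

/-- The vertex type of `G_k`. -/
def Vt : ℕ → Type
  | 0 => Fin 15 ⊕ Fin 15 ⊕ Fin 5
  | k + 1 => Vt k ⊕ Vt k ⊕ Fin 5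

/-- The five distinguished vertices `a,b,c,d,x` of `G_k`. -/
def distV : (k : ℕ) → Fin 5 → Vt k
  | 0, i => Sum.inr (Sum.inr i)
  | _ + 1, i => Sum.inr (Sum.inr i)

/-- The graph `G_k`: for `k ≥ 1` it is obtained from two disjoint copies of
`G_{k-1}` by adding five new vertices, the `i`-th of which is adjacent exactly
to the `i`-th distinguished vertex of each of the two copies. -/
def Gk : (k : ℕ) → SimpleGraph (Vt k)
  | 0 => G₀
  | k + 1 => glue (Gk k) (distV k) (distV k)


/-- Two vertices are joined by a walk of length at most `n`. -/
def Rch {V : Type*} (G : SimpleGraph V) (n : ℕ) (u v : V) : Prop :=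
  ∃ p : G.Walk u v, p.length ≤ n

theorem Rch.dist_le {V : Type*} {G : SimpleGraph V} {n : ℕ} {u v : V} (h : Rch G n u v) :
    G.dist u v ≤ n := by
  obtain ⟨p, hp⟩ := h
  exact (SimpleGraph.dist_le p).trans hp

theorem Rch.mono {V : Type*} {G : SimpleGraph V} {n m : ℕ} {u v : V} (h : Rch G n u v)
    (hm : n ≤ m) : Rch G m u v := by
  obtain ⟨p, hp⟩ := h
  exact ⟨p, hp.trans hm⟩

theorem Rch.trans {V : Type*} {G : SimpleGraph V} {n m : ℕ} {u v w : V} (h : Rch G n u v)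
    (h' : Rch G m v w) : Rch G (n + m) u w := by
  obtain ⟨p, hp⟩ := h
  obtain ⟨q, hq⟩ := h'
  exact ⟨p.append q, by rw [SimpleGraph.Walk.length_append]; omega⟩

theorem Rch.symm {V : Type*} {G : SimpleGraph V} {n : ℕ} {u v : V} (h : Rch G n u v) :
    Rch G n v u := by
  obtain ⟨p, hp⟩ := h
  exact ⟨p.reverse, by rw [SimpleGraph.Walk.length_reverse]; omega⟩

theorem Rch.map {V W : Type*} {G : SimpleGraph V} {G' : SimpleGraph W} (φ : G →g G')
    {n : ℕ} {u v : V} (h : Rch G n u v) : Rch G' n (φ u) (φ v) := by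
  obtain ⟨p, hp⟩ := h
  exact ⟨p.map φ, by rw [SimpleGraph.Walk.length_map]; omega⟩

theorem Rch.adj {V : Type*} {G : SimpleGraph V} {u v : V} (h : G.Adj u v) : Rch G 1 u v :=
  ⟨h.toWalk, by simp⟩

/-- Neighbours of `v` in an edge list. -/
def nbs (E : List (ℕ × ℕ)) (v : ℕ) : List ℕ :=
  E.filterMap fun e => if e.1 = v then some e.2 else if e.2 = v then some e.1 else none

/-- Bit mask of a ball. -/
def ballM (E : List (ℕ × ℕ)) : ℕ → ℕ → ℕ
  | 0, v => 2 ^ v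
  | n + 1, v => (nbs E v).foldr (fun w m => ballM E n w ||| m) (ballM E n v)

theorem foldr_or {g : ℕ → ℕ} {b x : ℕ} : ∀ (l : List ℕ),
    (l.foldr (fun w m => g w ||| m) b).testBit x = true →
      b.testBit x = true ∨ ∃ w ∈ l, (g w).testBit x = true
  | [], h => Or.inl h
  | w :: l, h => by
    simp only [List.foldr_cons, Nat.testBit_or, Bool.or_eq_true] at h
    rcases h with h | h
    · exact Or.inr ⟨w, by simp, h⟩
    · rcases foldr_or l h with h | ⟨y, hy, h⟩
      · exact Or.inl h
      · exact Or.inr ⟨y, by simp [hy], h⟩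

theorem ballM_sound {V : Type*} {G : SimpleGraph V} (f : ℕ → V) (E : List (ℕ × ℕ))
    (hE : ∀ e ∈ E, G.Adj (f e.1) (f e.2)) :
    ∀ n v w, (ballM E n v).testBit w = true → Rch G n (f v) (f w) := by
  intro n
  induction n with
  | zero =>
    intro v w h
    rw [ballM, Nat.testBit_two_pow] at h
    have : v = w := by simpa using h
    subst this
    exact ⟨SimpleGraph.Walk.nil, by simp⟩
  | succ n ih =>
    intro v w h
    rw [ballM] at h
    rcases foldr_or _ h with h | ⟨y, hy, h⟩
    · exact (ih v w h).mono (by omega)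
    · have hadj : G.Adj (f v) (f y) := by
        simp only [nbs, List.mem_filterMap] at hy
        obtain ⟨e, he, hy⟩ := hy
        have := hE e he
        split_ifs at hy with h1 h2
        · simp only [Option.some.injEq] at hy
          rw [← h1, ← hy]; exact this
        · simp only [Option.some.injEq] at hy
          rw [← h2, ← hy]; exact this.symm
      exact ((Rch.adj hadj).trans (ih y w h)).mono (by omega)

def EH : List (ℕ × ℕ) :=
  [(0,1),(1,2),(2,6),(6,5),(5,4),(4,0),(1,3),(3,5),
   (7,8),(8,9),(9,13),(13,12),(12,11),(11,7),(8,10),(10,12),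
   (3,14),(14,10),(2,7),(4,13)]

def fH (n : ℕ) : Fin 15 := Fin.ofNat 15 n

theorem EH_adj : ∀ e ∈ EH, Hgraph.Adj (fH e.1) (fH e.2) := by
  simp only [Hgraph, SimpleGraph.fromRel_adj]
  decide

/-- Numbering of the vertices of `G₀`. -/
def fG (n : ℕ) : Fin 15 ⊕ Fin 15 ⊕ Fin 5 :=
  if n < 15 then Sum.inl (fH n)
  else if n < 30 then Sum.inr (Sum.inl (fH (n - 15)))
  else Sum.inr (Sum.inr (Fin.ofNat 5 (n - 30)))

def glueL {V : Type*} (G : SimpleGraph V) (p q : Fin 5 → V) : G →g glue G p q where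
  toFun := Sum.inl
  map_rel' := by
    intro a b h
    simp only [glue, SimpleGraph.fromRel_adj]
    exact ⟨by simpa using h.ne, Or.inl h⟩

def glueR {V : Type*} (G : SimpleGraph V) (p q : Fin 5 → V) : G →g glue G p q where
  toFun := fun v => Sum.inr (Sum.inl v)
  map_rel' := by
    intro a b h
    simp only [glue, SimpleGraph.fromRel_adj]
    exact ⟨by simpa using h.ne, Or.inl h⟩

theorem glue_p {V : Type*} (G : SimpleGraph V) (p q : Fin 5 → V) (i : Fin 5) :
    (glue G p q).Adj (Sum.inr (Sum.inr i)) (Sum.inl (p i)) := by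
  simp [glue, SimpleGraph.fromRel_adj]

theorem glue_q {V : Type*} (G : SimpleGraph V) (p q : Fin 5 → V) (i : Fin 5) :
    (glue G p q).Adj (Sum.inr (Sum.inr i)) (Sum.inr (Sum.inl (q i))) := by
  simp [glue, SimpleGraph.fromRel_adj]

def EG : List (ℕ × ℕ) :=
  EH ++ EH.map (fun e => (e.1 + 15, e.2 + 15)) ++
  [(30,4),(31,13),(32,2),(33,7),(34,14),(30,15),(31,24),(32,26),(33,21),(34,29)]

theorem EG_adj : ∀ e ∈ EG, G₀.Adj (fG e.1) (fG e.2) := by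
  intro e he
  simp only [EG, List.mem_append, List.mem_map] at he
  have hb : ∀ e ∈ EH, e.1 < 15 ∧ e.2 < 15 := by decide
  rcases he with (he | ⟨e, he, rfl⟩) | he
  · have := (glueL Hgraph pH qH).map_rel (EH_adj e he)
    simp only [fG, hb e he, if_true]
    exact this
  · have := (glueR Hgraph pH qH).map_rel (EH_adj e he)
    have h1 := hb e he
    have h2 : ¬ e.1 + 15 < 15 := by omega
    have h3 : ¬ e.2 + 15 < 15 := by omega
    have h4 : e.1 + 15 < 30 := by omega
    have h5 : e.2 + 15 < 30 := by omega
    simp only [fG, h2, h3, h4, h5, if_true, if_false, Nat.add_sub_cancel]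
    exact this
  · simp only [List.mem_cons, List.not_mem_nil, or_false] at he
    rcases he with rfl | rfl | rfl | rfl | rfl | rfl | rfl | rfl | rfl | rfl
    · exact glue_p Hgraph pH qH 0
    · exact glue_p Hgraph pH qH 1
    · exact glue_p Hgraph pH qH 2
    · exact glue_p Hgraph pH qH 3
    · exact glue_p Hgraph pH qH 4
    · exact glue_q Hgraph pH qH 0
    · exact glue_q Hgraph pH qH 1
    · exact glue_q Hgraph pH qH 2
    · exact glue_q Hgraph pH qH 3
    · exact glue_q Hgraph pH qH 4

theorem diam_check : ∀ u < 35, ∀ v < 35, ∃ t < 5, ∃ i < 7,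
    (ballM EG i u).testBit (30 + t) = true ∧
      (ballM EG (6 - i) v).testBit (30 + t) = true := by
  decide +kernel

theorem fG_surj (x : Fin 15 ⊕ Fin 15 ⊕ Fin 5) : ∃ n < 35, fG n = x := by
  revert x
  decide

/-- Any two vertices of `G₀` are joined by a walk of length at most 6 through one of the
distinguished vertices. -/
theorem G₀_through (x y : Fin 15 ⊕ Fin 15 ⊕ Fin 5) : ∃ t : Fin 5, ∃ i ≤ 6,
    Rch G₀ i x (Sum.inr (Sum.inr t)) ∧ Rch G₀ (6 - i) y (Sum.inr (Sum.inr t)) := by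
  obtain ⟨u, hu, rfl⟩ := fG_surj x
  obtain ⟨v, hv, rfl⟩ := fG_surj y
  obtain ⟨t, ht, i, hi, h1, h2⟩ := diam_check u hu v hv
  have e : fG (30 + t) = Sum.inr (Sum.inr (Fin.ofNat 5 t)) := by
    have a : ¬ 30 + t < 15 := by omega
    have b : ¬ 30 + t < 30 := by omega
    simp only [fG, a, b, if_false, Nat.add_sub_cancel_left]
  refine ⟨Fin.ofNat 5 t, i, by omega, ?_, ?_⟩
  · rw [← e]; exact ballM_sound fG EG EG_adj _ _ _ h1
  · rw [← e]; exact ballM_sound fG EG EG_adj _ _ _ h2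

/-- The two copies of `G₀` in `G₁`. -/
def cpy : Bool → (G₀ →g glue G₀ (distV 0) (distV 0))
  | false => glueL G₀ (distV 0) (distV 0)
  | true => glueR G₀ (distV 0) (distV 0)

/-- The two copies of `H` in `G₀`. -/
def cpyH : Bool → (Hgraph →g G₀)
  | false => glueL Hgraph pH qH
  | true => glueR Hgraph pH qH

theorem cpy_same (s : Bool) (x y : Fin 15 ⊕ Fin 15 ⊕ Fin 5) :
    Rch (glue G₀ (distV 0) (distV 0)) 6 (cpy s x) (cpy s y) := by
  obtain ⟨t, i, hi, h1, h2⟩ := G₀_through x y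
  exact ((h1.trans h2.symm).map (cpy s)).mono (by omega)

theorem cpy_adj (s : Bool) (t : Fin 5) :
    (glue G₀ (distV 0) (distV 0)).Adj (Sum.inr (Sum.inr t)) (cpy s (Sum.inr (Sum.inr t))) := by
  cases s
  · exact glue_p G₀ (distV 0) (distV 0) t
  · exact glue_q G₀ (distV 0) (distV 0) t

theorem cpy_any (s s' : Bool) (x y : Fin 15 ⊕ Fin 15 ⊕ Fin 5) :
    Rch (glue G₀ (distV 0) (distV 0)) 8 (cpy s x) (cpy s' y) := by
  obtain ⟨t, i, hi, h1, h2⟩ := G₀_through x y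
  exact ((((h1.map (cpy s)).trans (Rch.adj (cpy_adj s t).symm)).trans
    (Rch.adj (cpy_adj s' t))).trans (h2.map (cpy s')).symm).mono (by omega)

/-- Refutation search; an item holds a vertex and, for each colour `1,…,5`, the mask of the
vertices that may share this colour with it. -/
def srch : List (ℕ × ℕ × ℕ × ℕ × ℕ × ℕ) → ℕ → ℕ → ℕ → ℕ → ℕ → Bool → Bool
  | [], _, _, _, _, _, _ => false
  | (v, k1, k2, k3, k4, k5) :: l, a1, a2, a3, a4, a5, e =>
    (!a1.testBit v || srch l (a1 &&& k1) a2 a3 a4 a5 e) &&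
    ((!a2.testBit v || srch l a1 (a2 &&& k2) a3 a4 a5 e) &&
    ((!a3.testBit v || srch l a1 a2 (a3 &&& k3) a4 a5 e) &&
    ((!a4.testBit v || srch l a1 a2 a3 (a4 &&& k4) a5 e) &&
    ((!a5.testBit v || srch l a1 a2 a3 a4 (a5 &&& k5) e) &&
    (!e || srch l a1 a2 a3 a4 a5 false)))))

def items : List (ℕ × ℕ × ℕ × ℕ × ℕ × ℕ) :=
  [(8,30847,123,33,0,0),
   (7,30331,24633,16,0,0),
   (10,11007,119,65,0,0),
   (12,17407,111,66,0,0),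
   (11,26495,17019,41,0,0),
   (9,23807,18543,74,0,0),
   (13,19951,16590,4,0,0),
   (14,15351,10965,0,0,0),
   (2,32569,30224,8192,0,0),
   (1,32752,16128,4608,0,0),
   (3,16341,15232,2560,0,0),
   (5,32647,8064,2304,0,0),
   (4,24526,19844,128,0,0),
   (6,32667,32513,5632,0,0),
   (0,32748,24512,3328,0,0)]

def GoodP (c : ℕ → ℕ) (p q : ℕ × ℕ × ℕ × ℕ × ℕ × ℕ) : Prop :=
  (c p.1 = 1 → c q.1 = 1 → p.2.1.testBit q.1 = true) ∧
  (c p.1 = 2 → c q.1 = 2 → p.2.2.1.testBit q.1 = true) ∧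
  (c p.1 = 3 → c q.1 = 3 → p.2.2.2.1.testBit q.1 = true) ∧
  (c p.1 = 4 → c q.1 = 4 → p.2.2.2.2.1.testBit q.1 = true) ∧
  (c p.1 = 5 → c q.1 = 5 → p.2.2.2.2.2.testBit q.1 = true) ∧
  ¬ (6 ≤ c p.1 ∧ 6 ≤ c q.1)

theorem srch_sound (c : ℕ → ℕ) : ∀ (l : List (ℕ × ℕ × ℕ × ℕ × ℕ × ℕ)) (a1 a2 a3 a4 a5 : ℕ)
    (e : Bool), l.Pairwise (GoodP c) → (∀ p ∈ l, 1 ≤ c p.1) →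
    (∀ p ∈ l, c p.1 = 1 → a1.testBit p.1 = true) →
    (∀ p ∈ l, c p.1 = 2 → a2.testBit p.1 = true) →
    (∀ p ∈ l, c p.1 = 3 → a3.testBit p.1 = true) →
    (∀ p ∈ l, c p.1 = 4 → a4.testBit p.1 = true) →
    (∀ p ∈ l, c p.1 = 5 → a5.testBit p.1 = true) →
    (e = false → ∀ p ∈ l, c p.1 < 6) →
    srch l a1 a2 a3 a4 a5 e = false := by
  intro l
  induction l with
  | nil => intros; rfl
  | cons x l ih =>
    intro a1 a2 a3 a4 a5 e hp hc h1 h2 h3 h4 h5 he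
    obtain ⟨v, k1, k2, k3, k4, k5⟩ := x
    rw [List.pairwise_cons] at hp
    obtain ⟨hx, hp⟩ := hp
    simp only [List.forall_mem_cons] at hc h1 h2 h3 h4 h5 he
    obtain ⟨c0, hc⟩ := hc
    obtain ⟨b1, h1⟩ := h1
    obtain ⟨b2, h2⟩ := h2
    obtain ⟨b3, h3⟩ := h3
    obtain ⟨b4, h4⟩ := h4
    obtain ⟨b5, h5⟩ := h5
    have hcase : c v = 1 ∨ c v = 2 ∨ c v = 3 ∨ c v = 4 ∨ c v = 5 ∨ 6 ≤ c v := by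
      omega
    have he' : e = false → ∀ p ∈ l, c p.1 < 6 := fun h => (he h).2
    rw [srch]
    rcases hcase with h | h | h | h | h | h
    · rw [b1 h, ih (a1 &&& k1) a2 a3 a4 a5 e hp hc ?_ h2 h3 h4 h5 he']
      · simp
      · intro p hpl hcp
        rw [Nat.testBit_and, h1 p hpl hcp, (hx p hpl).1 h hcp]; rfl
    · rw [b2 h, ih a1 (a2 &&& k2) a3 a4 a5 e hp hc h1 ?_ h3 h4 h5 he']
      · simp
      · intro p hpl hcp
        rw [Nat.testBit_and, h2 p hpl hcp, (hx p hpl).2.1 h hcp]; rfl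
    · rw [b3 h, ih a1 a2 (a3 &&& k3) a4 a5 e hp hc h1 h2 ?_ h4 h5 he']
      · simp
      · intro p hpl hcp
        rw [Nat.testBit_and, h3 p hpl hcp, (hx p hpl).2.2.1 h hcp]; rfl
    · rw [b4 h, ih a1 a2 a3 (a4 &&& k4) a5 e hp hc h1 h2 h3 ?_ h5 he']
      · simp
      · intro p hpl hcp
        rw [Nat.testBit_and, h4 p hpl hcp, (hx p hpl).2.2.2.1 h hcp]; rfl
    · rw [b5 h, ih a1 a2 a3 a4 (a5 &&& k5) e hp hc h1 h2 h3 h4 ?_ he']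
      · simp
      · intro p hpl hcp
        rw [Nat.testBit_and, h5 p hpl hcp, (hx p hpl).2.2.2.2.1 h hcp]; rfl
    · have hee : e = true := by
        cases e
        · have := (he rfl).1
          omega
        · rfl
      rw [hee, ih a1 a2 a3 a4 a5 false hp hc h1 h2 h3 h4 h5 ?_]
      · simp
      · intro _ p hpl
        have := (hx p hpl).2.2.2.2.2
        change ¬ (6 ≤ c v ∧ 6 ≤ c p.1) at this
        omega

theorem srch_run : srch items 32767 32767 32767 32767 32767 true = true := by
  decide +kernel

theorem items_lt : ∀ p ∈ items, p.1 < 15 := by decide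

theorem items_nodup : items.Pairwise (fun p q => p.1 ≠ q.1) := by decide

theorem items_ball : ∀ p ∈ items, ∀ w < 15, w ≠ p.1 →
    (p.2.1.testBit w = true ∨ (ballM EH 1 p.1).testBit w = true) ∧
    (p.2.2.1.testBit w = true ∨ (ballM EH 2 p.1).testBit w = true) ∧
    (p.2.2.2.1.testBit w = true ∨ (ballM EH 3 p.1).testBit w = true) ∧
    (p.2.2.2.2.1.testBit w = true ∨ (ballM EH 4 p.1).testBit w = true) ∧
    (p.2.2.2.2.2.testBit w = true ∨ (ballM EH 5 p.1).testBit w = true) := by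
  decide +kernel

theorem full_bit : ∀ v < 15, (32767 : ℕ).testBit v = true := by decide

theorem fH_inj : ∀ u < 15, ∀ v < 15, fH u = fH v → u = v := by decide

/-- In every packing-type colouring of `H`, at least two vertices have colour at least 6. -/
theorem H_two (c : Fin 15 → ℕ) (hc : ∀ v, 1 ≤ c v)
    (hp : ∀ u v i, u ≠ v → c u = i → c v = i → ¬ Rch Hgraph i u v) :
    ∃ g : Bool → Fin 15, Function.Injective g ∧ ∀ b, 6 ≤ c (g b) := by
  by_contra hcon
  have key : ∀ u v, u ≠ v → ¬ (6 ≤ c u ∧ 6 ≤ c v) := by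
    rintro u v huv ⟨h1, h2⟩
    apply hcon
    refine ⟨fun b => if b then u else v, ?_, ?_⟩
    · intro a b hab
      cases a <;> cases b <;> simp_all
    · intro b; cases b <;> simpa
  have := srch_sound (fun n => c (fH n)) items 32767 32767 32767 32767 32767 true ?_
    (fun p _ => hc _)
    (fun p h _ => full_bit _ (items_lt p h)) (fun p h _ => full_bit _ (items_lt p h))
    (fun p h _ => full_bit _ (items_lt p h)) (fun p h _ => full_bit _ (items_lt p h))
    (fun p h _ => full_bit _ (items_lt p h)) (fun h => by cases h)
  · rw [srch_run] at this; cases this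
  · refine items_nodup.imp_of_mem ?_
    intro p q hpm hqm hne
    have hq := items_lt q hqm
    have hne' : fH p.1 ≠ fH q.1 := fun h => hne (fH_inj _ (items_lt p hpm) _ hq h)
    obtain ⟨t1, t2, t3, t4, t5⟩ := items_ball p hpm q.1 hq hne.symm
    have S := ballM_sound fH EH EH_adj
    exact ⟨fun a b => t1.resolve_right fun t => hp _ _ _ hne' a b (S _ _ _ t),
      fun a b => t2.resolve_right fun t => hp _ _ _ hne' a b (S _ _ _ t),
      fun a b => t3.resolve_right fun t => hp _ _ _ hne' a b (S _ _ _ t),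
      fun a b => t4.resolve_right fun t => hp _ _ _ hne' a b (S _ _ _ t),
      fun a b => t5.resolve_right fun t => hp _ _ _ hne' a b (S _ _ _ t),
      key _ _ hne'⟩

theorem cpy_inj (s s' : Bool) (x y) (h : cpy s x = cpy s' y) : s = s' ∧ x = y := by
  cases s <;> cases s' <;> simp [cpy, glueL, glueR] at h <;> simp [h]

theorem cpyH_inj (s s' : Bool) (x y) (h : cpyH s x = cpyH s' y) : s = s' ∧ x = y := by
  cases s <;> cases s'
  · exact ⟨rfl, Sum.inl_injective h⟩
  · cases h
  · cases h
  · exact ⟨rfl, Sum.inl_injective (Sum.inr_injective h)⟩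

/-- Labels: colours 6 and 7 are tagged with the copy, colours 8, 9, 10 are not. -/
def lbl (s : Bool) (i : ℕ) : Fin 7 :=
  if i = 6 then (if s then 0 else 1)
  else if i = 7 then (if s then 2 else 3)
  else if i = 8 then 4 else if i = 9 then 5 else 6

theorem lbl_eq (s s' : Bool) (i : ℕ) (hi : i < 11) (j : ℕ) (hj : j < 11) (h6 : 6 ≤ i)
    (h6' : 6 ≤ j) (h : lbl s i = lbl s' j) : i = j ∧ (8 ≤ i ∨ s = s') := by
  interval_cases i <;> interval_cases j <;> cases s <;> cases s' <;> revert h <;> decide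

theorem no_coloring (k : ℕ) (hk : k ≤ 10) :
    ¬ ∃ c, IsPackingColoring (glue G₀ (distV 0) (distV 0)) k c := by
  rintro ⟨c, hc, hp⟩
  have hpk : ∀ u v n, Rch (glue G₀ (distV 0) (distV 0)) n u v → n ≤ c u → c u = c v → u = v := by
    intro u v n h hn huv
    by_contra hne
    have := hp (c u) (hc u).1 (hc u).2 u rfl v huv.symm hne
    have := h.dist_le
    omega
  have H : ∀ s h : Bool, ∃ g : Bool → Fin 15, Function.Injective g ∧
      ∀ b, 6 ≤ c (cpy s (cpyH h (g b))) := by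
    intro s h
    refine H_two (fun v => c (cpy s (cpyH h v))) (fun v => (hc _).1) ?_
    intro u v i hne hu hv hr
    have := hpk _ _ i ((hr.map (cpyH h)).map (cpy s)) hu.ge (hu.trans hv.symm)
    exact hne (cpyH_inj _ _ _ _ (cpy_inj _ _ _ _ this).2).2
  choose g hg hg6 using H
  let L : Bool × Bool × Bool → Fin 7 := fun t =>
    lbl t.1 (c (cpy t.1 (cpyH t.2.1 (g t.1 t.2.1 t.2.2))))
  have hL : Function.Injective L := by
    rintro ⟨s, h, b⟩ ⟨s', h', b'⟩ hab
    have B : ∀ x, c x < 11 := fun x => by have := (hc x).2; omega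
    obtain ⟨e, hs⟩ := lbl_eq _ _ _ (B _) _ (B _) (hg6 s h b) (hg6 s' h' b') hab
    have heq : cpy s (cpyH h (g s h b)) = cpy s' (cpyH h' (g s' h' b')) := by
      rcases hs with hs | rfl
      · exact hpk _ _ 8 (cpy_any _ _ _ _) hs e
      · exact hpk _ _ 6 (cpy_same _ _ _) (hg6 _ _ _) e
    obtain ⟨rfl, h2⟩ := cpy_inj _ _ _ _ heq
    obtain ⟨rfl, h3⟩ := cpyH_inj _ _ _ _ h2
    rw [hg _ _ h3]
  have := Fintype.card_le_of_injective L hL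
  simp at this

theorem exists_coloring : ∃ k c, IsPackingColoring (glue G₀ (distV 0) (distV 0)) k c := by
  have : Finite (Vt 0) := inferInstanceAs (Finite (Fin 15 ⊕ Fin 15 ⊕ Fin 5))
  obtain ⟨n, ⟨e⟩⟩ := Finite.exists_equiv_fin (Vt 0 ⊕ Vt 0 ⊕ Fin 5)
  refine ⟨n + 1, fun v => (e v).val + 1, fun v => ⟨Nat.succ_pos _, Nat.succ_le_succ (e v).isLt.le⟩, ?_⟩
  intro i _ _ u hu v hv hne
  exfalso
  apply hne
  apply e.injective
  apply Fin.ext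
  have h1 : (e u).val + 1 = i := hu
  have h2 : (e v).val + 1 = i := hv
  omega


/-- The packing chromatic number of `G₁` is at least `11`; that is, `G₁` admits
no `k`-packing coloring for any `k ≤ 10`. -/
theorem stmt12 :
    11 ≤ packingChromaticNumber (Gk 1) ∧
    ∀ k ≤ 10, ¬ ∃ c : Vt 1 → ℕ, IsPackingColoring (Gk 1) k c := by
  have h : ∀ k ≤ 10, ¬ ∃ c : Vt 1 → ℕ, IsPackingColoring (Gk 1) k c := no_coloring
  refine ⟨?_, h⟩
  have hne : {k | ∃ c : Vt 1 → ℕ, IsPackingColoring (Gk 1) k c}.Nonempty := exists_coloring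
  have hm := Nat.sInf_mem hne
  by_contra hlt
  exact h _ (by unfold packingChromaticNumber at hlt; omega) hm
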